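/- (Backward propagation bound, spectral version.) There exist absolute constants C, c > 0 such that if m ≥ C·n·L·log(n·L) and d ≤ m/(C·L·log m), then with probability at least 1 − e^{−c·m/L} over the random matrices A, W_1,…,W_L, B: for all i ∈ [n] and all 1 ≤ a ≤ L, ‖vᵀ B D_{i,L} W_L ⋯ D_{i,a} W_a‖ ≤ C·√(m/d)·‖v‖ for every vector v ∈ ℝ^d. -/

import Mathlib

open MeasureTheory ProbabilityTheory

noncomputable section

namespace DNNPaper

/-! ### Elementary linear algebra on plain function matrices -/

def mulVec {p q : ℕ} (M : Fin p → Fin q → ℝ) (v : Fin q → ℝ) : Fin p → ℝ :=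
  fun i => ∑ j, M i j * v j

def mmul {p q r : ℕ} (M : Fin p → Fin q → ℝ) (N : Fin q → Fin r → ℝ) :
    Fin p → Fin r → ℝ :=
  fun i k => ∑ j, M i j * N j k

def transpose {p q : ℕ} (M : Fin p → Fin q → ℝ) : Fin q → Fin p → ℝ :=
  fun j i => M i j

def dot {p : ℕ} (u v : Fin p → ℝ) : ℝ := ∑ i, u i * v i

def outer {p q : ℕ} (u : Fin p → ℝ) (v : Fin q → ℝ) : Fin p → Fin q → ℝ :=
  fun i j => u i * v j

def idMat (p : ℕ) : Fin p → Fin p → ℝ := fun i j => if i = j then 1 else 0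

def diagMat {p : ℕ} (dg : Fin p → ℝ) : Fin p → Fin p → ℝ :=
  fun i j => if i = j then dg i else 0

def relu {p : ℕ} (v : Fin p → ℝ) : Fin p → ℝ := fun k => max (v k) 0

/-- diagonal entries of the ReLU sign matrix of a pre-activation vector -/
def signOf {p : ℕ} (g : Fin p → ℝ) : Fin p → ℝ := fun k => if 0 ≤ g k then 1 else 0

/-- Euclidean norm -/
def l2 {p : ℕ} (v : Fin p → ℝ) : ℝ := Real.sqrt (∑ k, v k ^ 2)

/-- max-norm -/
def linf {p : ℕ} (v : Fin p → ℝ) : ℝ := ⨆ k, |v k|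

/-- number of nonzero entries -/
def l0 {p : ℕ} (v : Fin p → ℝ) : ℕ := (Finset.univ.filter fun k => v k ≠ 0).card

/-- Frobenius norm -/
def frob {p q : ℕ} (M : Fin p → Fin q → ℝ) : ℝ := Real.sqrt (∑ i, ∑ j, M i j ^ 2)

/-- spectral norm (ℓ₂ operator norm) -/
def spec {p q : ℕ} (M : Fin p → Fin q → ℝ) : ℝ :=
  sSup {r | ∃ v : Fin q → ℝ, l2 v ≤ 1 ∧ r = l2 (mulVec M v)}

/-- trace (Frobenius) inner product -/
def innerF {p q : ℕ} (M N : Fin p → Fin q → ℝ) : ℝ := ∑ i, ∑ j, M i j * N i j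

/-- `‖W‖₂ = max_ℓ ‖W_ℓ‖₂` for a tuple of matrices -/
def tupleSpec {m L : ℕ} (W : Fin L → Fin m → Fin m → ℝ) : ℝ := ⨆ ℓ, spec (W ℓ)

/-! ### The network -/

variable {𝔡 m d L : ℕ}

/-- `Wat W ℓ` is the weight matrix of layer `ℓ ∈ {1,…,L}` (identity outside this range). -/
def Wat (W : Fin L → Fin m → Fin m → ℝ) (ℓ : ℕ) : Fin m → Fin m → ℝ :=
  if h : 1 ≤ ℓ ∧ ℓ ≤ L then W ⟨ℓ - 1, by omega⟩ else idMat m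

/-- the forward (post-activation) vectors `h_ℓ`, `ℓ = 0,1,…,L` -/
def hseq (A : Fin m → Fin 𝔡 → ℝ) (W : Fin L → Fin m → Fin m → ℝ) (x : Fin 𝔡 → ℝ) :
    ℕ → Fin m → ℝ
  | 0 => relu (mulVec A x)
  | ℓ + 1 =>
      if ℓ + 1 ≤ L then relu (mulVec (Wat W (ℓ + 1)) (hseq A W x ℓ)) else hseq A W x ℓ

/-- the pre-activation vectors `g_ℓ`, `ℓ = 0,1,…,L` -/
def gseq (A : Fin m → Fin 𝔡 → ℝ) (W : Fin L → Fin m → Fin m → ℝ) (x : Fin 𝔡 → ℝ) :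
    ℕ → Fin m → ℝ
  | 0 => mulVec A x
  | ℓ + 1 => mulVec (Wat W (ℓ + 1)) (hseq A W x ℓ)

/-- `chainProd W Dfun a b = (D_b W_b) (D_{b-1} W_{b-1}) ⋯ (D_a W_a)` where `D_ℓ` is the
diagonal matrix with entries `Dfun ℓ`; it is the identity when `b < a`, and factors with
index outside `{1,…,L}` are skipped. -/
def chainProd (W : Fin L → Fin m → Fin m → ℝ) (Dfun : ℕ → Fin m → ℝ) (a : ℕ) :
    ℕ → Fin m → Fin m → ℝ
  | 0 => idMat m
  | b + 1 =>
      if a ≤ b + 1 ∧ b + 1 ≤ L then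
        mmul (mmul (diagMat (Dfun (b + 1))) (Wat W (b + 1))) (chainProd W Dfun a b)
      else chainProd W Dfun a b

/-- `prodDW A W x a b = D_b W_b D_{b-1} W_{b-1} ⋯ D_a W_a` with the sign matrices of input `x` -/
def prodDW (A : Fin m → Fin 𝔡 → ℝ) (W : Fin L → Fin m → Fin m → ℝ) (x : Fin 𝔡 → ℝ)
    (a b : ℕ) : Fin m → Fin m → ℝ :=
  chainProd W (fun ℓ => signOf (gseq A W x ℓ)) a b

/-- `Back_ℓ = B D_L W_L ⋯ D_ℓ W_ℓ` (equal to `B` for `ℓ = L+1`) -/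
def backMat (B : Fin d → Fin m → ℝ) (A : Fin m → Fin 𝔡 → ℝ)
    (W : Fin L → Fin m → Fin m → ℝ) (x : Fin 𝔡 → ℝ) (ℓ : ℕ) : Fin d → Fin m → ℝ :=
  mmul B (prodDW A W x ℓ L)

/-- formula gradient w.r.t. `W_ℓ` with an arbitrary (fake) loss vector `v`:
`D_ℓ (Back_{ℓ+1}ᵀ v) h_{ℓ-1}ᵀ` -/
def gradW (B : Fin d → Fin m → ℝ) (A : Fin m → Fin 𝔡 → ℝ)
    (W : Fin L → Fin m → Fin m → ℝ) (x : Fin 𝔡 → ℝ) (v : Fin d → ℝ) (ℓ : ℕ) :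
    Fin m → Fin m → ℝ :=
  outer (mulVec (diagMat (signOf (gseq A W x ℓ)))
      (mulVec (transpose (backMat B A W x (ℓ + 1))) v))
    (hseq A W x (ℓ - 1))

/-- loss vector `B h_L − y` -/
def lossVec (B : Fin d → Fin m → ℝ) (A : Fin m → Fin 𝔡 → ℝ)
    (W : Fin L → Fin m → Fin m → ℝ) (x : Fin 𝔡 → ℝ) (y : Fin d → ℝ) : Fin d → ℝ :=
  fun j => mulVec B (hseq A W x L) j - y j

/-- per-sample ℓ₂ regression loss `F_i` -/
def objFi (B : Fin d → Fin m → ℝ) (A : Fin m → Fin 𝔡 → ℝ)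
    (W : Fin L → Fin m → Fin m → ℝ) (x : Fin 𝔡 → ℝ) (y : Fin d → ℝ) : ℝ :=
  (1 / 2) * l2 (lossVec B A W x y) ^ 2

/-- total objective `F` -/
def objF {n : ℕ} (B : Fin d → Fin m → ℝ) (A : Fin m → Fin 𝔡 → ℝ)
    (W : Fin L → Fin m → Fin m → ℝ) (x : Fin n → Fin 𝔡 → ℝ)
    (y : Fin n → Fin d → ℝ) : ℝ :=
  ∑ i, objFi B A W (x i) (y i)

/-- formula gradient of the total objective w.r.t. `W_ℓ` -/
def gradF {n : ℕ} (B : Fin d → Fin m → ℝ) (A : Fin m → Fin 𝔡 → ℝ)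
    (W : Fin L → Fin m → Fin m → ℝ) (x : Fin n → Fin 𝔡 → ℝ)
    (y : Fin n → Fin d → ℝ) (ℓ : ℕ) : Fin m → Fin m → ℝ :=
  ∑ i, gradW B A W (x i) (lossVec B A W (x i) (y i)) ℓ

/-! ### Random initialization -/

/-- a `p × q` random matrix with i.i.d. `N(0, v)` entries -/
def gaussMat (p q : ℕ) (v : NNReal) : Measure (Fin p → Fin q → ℝ) :=
  Measure.pi fun _ => Measure.pi fun _ => gaussianReal 0 v

/-- joint law of `(A, W)` at random initialization -/
def initAW (𝔡 m L : ℕ) :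
    Measure ((Fin m → Fin 𝔡 → ℝ) × (Fin L → Fin m → Fin m → ℝ)) :=
  (gaussMat m 𝔡 (2 / m)).prod (Measure.pi fun _ : Fin L => gaussMat m m (2 / m))

/-- joint law of `(A, W, B)` at random initialization -/
def initMeasure (𝔡 m d L : ℕ) :
    Measure ((Fin m → Fin 𝔡 → ℝ) ×
      (Fin L → Fin m → Fin m → ℝ) × (Fin d → Fin m → ℝ)) :=
  (gaussMat m 𝔡 (2 / m)).prod
    ((Measure.pi fun _ : Fin L => gaussMat m m (2 / m)).prod (gaussMat d m (1 / d)))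

/-!
For a matrix `N` and a standard Gaussian vector `u`, Cauchy–Schwarz gives
`⟨u, Nᵀ v⟩² ≤ ‖N u‖² ‖v‖²`. Taking `p`-th powers and averaging over `u` turns the left side into a
multiple of `‖Nᵀ v‖^(2p)`, so `E_u ‖N u‖^(2p)` controls `‖Nᵀ v‖` for all `v` at once.

For the backward matrix `N = B D_L W_L ⋯ D_a W_a`, the expectation of `‖N u‖^(2p)` is bounded by
integrating out one matrix at a time. If the input `h` of a layer is nonzero, then by symmetry the
gate `⟨w, h⟩ ≥ 0` keeps half of every even integral over a Gaussian row `w`, and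
`E ‖D W z‖^(2p) ≤ exp (8 p² / m) ‖z‖^(2p)` for each fixed `z`. The matrix `B` contributes
`(4p / (e d))^p √2^d` and the average over `u` contributes `(e m)^p`. For `p ≈ m / (8L)`, which is
at least `d`, the `L` layer factors multiply to at most `e^p`, so Markov's inequality bounds the
failure probability by `e^(-p)`. A layer input vanishes with probability at most `(L + 1) 2^(-m)`,
and the union bound over samples and layers costs only a factor `n L`.
-/

open scoped ENNReal NNReal Matrix

/-! ### Gaussian linear forms -/

section GaussianVector

variable {ι : Type*} [Fintype ι]

/-- Law of a vector with i.i.d. `N(0, v)` coordinates; a row of `gaussMat` has this law. -/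
def gaussVec (ι : Type*) [Fintype ι] (v : ℝ≥0) : Measure (ι → ℝ) :=
  Measure.pi fun _ => gaussianReal 0 v

instance (v : ℝ≥0) : IsProbabilityMeasure (gaussVec ι v) := by
  unfold gaussVec; infer_instance

instance (v : ℝ≥0) : (gaussVec ι v).IsNegInvariant where
  neg_eq_self := by
    have hneg : MeasurePreserving Neg.neg (gaussianReal 0 v) (gaussianReal 0 v) :=
      ⟨measurable_neg, by simpa using gaussianReal_map_neg (μ := 0) (v := v)⟩
    exact (measurePreserving_pi _ _ fun _ : ι => hneg).map_eq

lemma dotProduct_self_nonneg (z : ι → ℝ) : 0 ≤ z ⬝ᵥ z := by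
  simpa using dotProduct_self_star_nonneg z

lemma dotProduct_self_pos {z : ι → ℝ} (hz : z ≠ 0) : 0 < z ⬝ᵥ z := by
  simpa using Matrix.dotProduct_self_star_pos_iff.mpr hz

lemma gaussVec_map_dotProduct (v : ℝ≥0) (z : ι → ℝ) :
    (gaussVec ι v).map (· ⬝ᵥ z) = gaussianReal 0 (v * (z ⬝ᵥ z).toNNReal) := by
  have hscale : (gaussVec ι v).map (fun w i => w i * z i) =
      Measure.pi fun i => (gaussianReal 0 v).map (· * z i) :=
    have (i : ι) : IsProbabilityMeasure ((gaussianReal 0 v).map (· * z i)) :=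
      Measure.isProbabilityMeasure_map (by fun_prop)
    Measure.pi_map_pi (μ := fun _ => gaussianReal 0 v) (f := fun i t => t * z i)
      fun i => by fun_prop
  have hsum : (gaussVec ι v).map (· ⬝ᵥ z) =
      (Measure.pi fun i => (gaussianReal 0 v).map (· * z i)).map (fun w => ∑ i, w i) := by
    rw [← hscale, Measure.map_map (by fun_prop) (by fun_prop)]
    rfl
  refine Measure.ext_of_charFun (funext fun t => ?_)
  simp only [hsum, gaussianReal_map_mul_const]
  rw [charFun_map_sum_pi_eq_prod, Finset.prod_apply]
  simp only [charFun_gaussianReal, ← Complex.exp_sum, mul_zero, NNReal.coe_mul,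
    Real.coe_toNNReal _ (dotProduct_self_nonneg z)]
  simp only [dotProduct, Complex.ofReal_zero, Complex.ofReal_mul, Complex.ofReal_sum, NNReal.coe_mk,
    Complex.ofReal_pow, mul_zero, zero_mul, zero_sub, Finset.sum_neg_distrib, Finset.mul_sum,
    Finset.sum_mul, Finset.sum_div]
  congr! 3
  ring

lemma lintegral_comp_dotProduct_gaussVec (v : ℝ≥0) (z : ι → ℝ) {φ : ℝ → ℝ≥0∞}
    (hφ : Measurable φ) :
    ∫⁻ w, φ (w ⬝ᵥ z) ∂gaussVec ι v = ∫⁻ t, φ (√(v * (z ⬝ᵥ z)) * t) ∂gaussianReal 0 1 := by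
  have hvar : (.mk (√(v * (z ⬝ᵥ z)) ^ 2) (sq_nonneg _) : ℝ≥0) * 1 = v * (z ⬝ᵥ z).toNNReal := by
    ext
    rw [mul_one, NNReal.coe_mk, Real.sq_sqrt (mul_nonneg v.coe_nonneg (dotProduct_self_nonneg z)),
      NNReal.coe_mul, Real.coe_toNNReal _ (dotProduct_self_nonneg z)]
  have hmap := gaussianReal_map_const_mul (μ := 0) (v := 1) √(v * (z ⬝ᵥ z))
  rw [hvar, mul_zero, ← gaussVec_map_dotProduct] at hmap
  rw [← lintegral_map hφ (by fun_prop), ← hmap, lintegral_map hφ (by fun_prop)]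

lemma ae_dotProduct_ne_zero {v : ℝ≥0} (hv : v ≠ 0) {z : ι → ℝ} (hz : z ≠ 0) :
    ∀ᵐ w ∂gaussVec ι v, w ⬝ᵥ z ≠ 0 := by
  have := nullSingletonClass_gaussianReal (μ := 0) (v := v * (z ⬝ᵥ z).toNNReal)
    (mul_ne_zero hv (by simpa using dotProduct_self_pos hz))
  have hne : ∀ᵐ t ∂(gaussVec ι v).map (· ⬝ᵥ z), t ≠ 0 := by
    rw [gaussVec_map_dotProduct]
    exact Measure.ae_ne _ _
  exact ae_of_ae_map (f := (· ⬝ᵥ z)) (p := (· ≠ 0)) (by fun_prop) hne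

lemma lintegral_ofReal_gaussianReal {f : ℝ → ℝ} (hf : Measurable f) :
    ∫⁻ t, .ofReal (f t) ∂gaussianReal 0 1 =
      ∫⁻ t, .ofReal ((√(2 * Real.pi))⁻¹ * (f t * Real.exp (-t ^ 2 / 2))) := by
  rw [gaussianReal_of_var_ne_zero _ one_ne_zero,
    lintegral_withDensity_eq_lintegral_mul _ (measurable_gaussianPDF _ _) (by fun_prop)]
  refine lintegral_congr fun t => ?_
  rw [Pi.mul_apply, gaussianPDF_def, ← ENNReal.ofReal_mul (gaussianPDFReal_nonneg _ _ _),
    gaussianPDFReal_def]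
  simp only [NNReal.coe_one, mul_one, sub_zero, mul_comm (f t), mul_assoc]

lemma lintegral_exp_mul_sq_gaussianReal {s : ℝ} (hs : 2 * s < 1) :
    ∫⁻ t, .ofReal (Real.exp (s * t ^ 2)) ∂gaussianReal 0 1 = .ofReal (1 / √(1 - 2 * s)) := by
  have hb : 0 < 1 / 2 - s := by linarith
  have hexp (t : ℝ) : Real.exp (s * t ^ 2) * Real.exp (-t ^ 2 / 2) =
      Real.exp (-(1 / 2 - s) * t ^ 2) := by
    rw [← Real.exp_add]
    ring_nf
  simp only [lintegral_ofReal_gaussianReal (f := fun t => Real.exp (s * t ^ 2)) (by fun_prop), hexp]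
  rw [← ofReal_integral_eq_lintegral_ofReal ((integrable_exp_neg_mul_sq hb).const_mul _)
    (.of_forall fun t => by positivity), integral_const_mul, integral_gaussian,
    show Real.pi / (1 / 2 - s) = 2 * Real.pi / (1 - 2 * s) by field_simp,
    Real.sqrt_div (by positivity), ← mul_div_assoc, inv_mul_cancel₀ (by positivity)]

lemma lintegral_exp_mul_dotProduct_sq_gaussVec {v : ℝ≥0} {z : ι → ℝ} {s : ℝ}
    (hs : 2 * (s * (v * (z ⬝ᵥ z))) < 1) :
    ∫⁻ w, .ofReal (Real.exp (s * (w ⬝ᵥ z) ^ 2)) ∂gaussVec ι v =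
      .ofReal (1 / √(1 - 2 * (s * (v * (z ⬝ᵥ z))))) := by
  rw [lintegral_comp_dotProduct_gaussVec v z (φ := fun t => .ofReal (Real.exp (s * t ^ 2)))
    (by fun_prop), ← lintegral_exp_mul_sq_gaussianReal hs]
  refine lintegral_congr fun t => ?_
  rw [mul_pow, Real.sq_sqrt (mul_nonneg v.coe_nonneg (dotProduct_self_nonneg z)), ← mul_assoc s]

lemma lintegral_sq_pow_gaussianReal (p : ℕ) :
    ∫⁻ t, .ofReal ((t ^ 2) ^ p) ∂gaussianReal 0 1 = ((2 * p - 1).doubleFactorial : ℝ≥0∞) := by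
  have habs (t : ℝ) : (t ^ 2) ^ p * Real.exp (-t ^ 2 / 2) =
      |t| ^ (2 * p : ℝ) * Real.exp (-(1 / 2) * |t| ^ (2 : ℝ)) := by
    rw [Real.rpow_mul (abs_nonneg t), Real.rpow_natCast, Real.rpow_two, sq_abs]
    ring_nf
  have hint : Integrable fun t : ℝ => (t ^ 2) ^ p * Real.exp (-t ^ 2 / 2) := by
    refine (integrable_rpow_mul_exp_neg_mul_sq (b := 1 / 2) (by norm_num)
      (s := (2 * p : ℕ)) (by push_cast; linarith)).congr (.of_forall fun t => ?_)
    simp only [Real.rpow_natCast, pow_mul]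
    ring_nf
  rw [lintegral_ofReal_gaussianReal (by fun_prop),
    ← ofReal_integral_eq_lintegral_ofReal (hint.const_mul _) (.of_forall fun t => by positivity),
    integral_const_mul]
  simp only [habs]
  rw [integral_comp_abs (f := fun t : ℝ => t ^ (2 * p : ℝ) * Real.exp (-(1 / 2) * t ^ (2 : ℝ))),
    integral_rpow_mul_exp_neg_mul_rpow (by norm_num) (by linarith) (by norm_num),
    show (2 * (p : ℝ) + 1) / 2 = p + 1 / 2 by ring, Real.Gamma_nat_add_half,
    show -(2 * (p : ℝ) + 1) / 2 = -((p : ℝ) + 1 / 2) by ring, Real.rpow_neg (by norm_num),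
    Real.rpow_add (by norm_num), Real.rpow_natCast, ← Real.sqrt_eq_rpow, one_div,
    Real.sqrt_inv, Real.sqrt_mul zero_le_two, ← ENNReal.ofReal_natCast]
  congr 1
  field_simp
  rw [← mul_pow]
  norm_num

lemma factorial_le_doubleFactorial (p : ℕ) : p.factorial ≤ (2 * p - 1).doubleFactorial := by
  induction p with
  | zero => simp
  | succ k ih =>
    rcases k with _ | k
    · simp
    · rw [show 2 * (k + 1 + 1) - 1 = 2 * (k + 1) - 1 + 2 by omega,
        Nat.doubleFactorial_add_two, Nat.factorial_succ]
      exact Nat.mul_le_mul (by omega) ih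

lemma mul_exp_neg_one_pow_le_factorial (p : ℕ) : (p * Real.exp (-1)) ^ p ≤ p.factorial := by
  have h := Real.pow_div_factorial_le_exp (x := p) p.cast_nonneg p
  rw [div_le_iff₀ (by positivity)] at h
  rw [mul_pow, ← Real.exp_nat_mul, mul_neg_one, Real.exp_neg, ← div_eq_mul_inv,
    div_le_iff₀ (Real.exp_pos _)]
  linarith

lemma mul_exp_neg_one_pow_le_lintegral_gaussianReal (p : ℕ) :
    .ofReal ((p * Real.exp (-1)) ^ p) ≤ ∫⁻ t, .ofReal ((t ^ 2) ^ p) ∂gaussianReal 0 1 := by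
  rw [lintegral_sq_pow_gaussianReal, ← ENNReal.ofReal_natCast]
  exact ENNReal.ofReal_le_ofReal ((mul_exp_neg_one_pow_le_factorial p).trans
    (by exact_mod_cast factorial_le_doubleFactorial p))

end GaussianVector

/-! ### Integrals over product measures -/

section ProductMeasure

variable {X ι : Type*} [MeasurableSpace X] [Fintype ι]

lemma lintegral_prod_eval_pi (μ : Measure X) [IsProbabilityMeasure μ] {f : X → ℝ≥0∞}
    (hf : Measurable f) :
    ∫⁻ w, ∏ k, f (w k) ∂(Measure.pi fun _ : ι => μ) = (∫⁻ x, f x ∂μ) ^ Fintype.card ι := by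
  rw [lintegral_prod_eq_prod_lintegral_of_indepFun Finset.univ _
    (iIndepFun_pi (X := fun _ => f) fun _ => hf.aemeasurable)
    fun k => hf.comp (measurable_pi_apply k)]
  simp only [(measurePreserving_eval (fun _ : ι => μ) _).lintegral_comp hf, Finset.prod_const,
    Finset.card_univ]

lemma lintegral_exp_sum_pi (μ : Measure X) [IsProbabilityMeasure μ] {f : X → ℝ}
    (hf : Measurable f) :
    ∫⁻ w, .ofReal (Real.exp (∑ k, f (w k))) ∂(Measure.pi fun _ : ι => μ) =
      (∫⁻ x, .ofReal (Real.exp (f x)) ∂μ) ^ Fintype.card ι := by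
  rw [← lintegral_prod_eval_pi μ (by fun_prop)]
  simp only [Real.exp_sum, ENNReal.ofReal_prod_of_nonneg fun _ _ => (Real.exp_pos _).le]

-- From `u ≤ exp (u - 1)` at `u = t / Z`; sharp when `t` is concentrated at `Z`.
lemma pow_le_mul_exp {t Z : ℝ} (ht : 0 ≤ t) (hZ : 0 < Z) (p : ℕ) :
    t ^ p ≤ (Z * Real.exp (-1)) ^ p * Real.exp (p / Z * t) := by
  have h : t ≤ Z * Real.exp (-1) * Real.exp (t / Z) := by
    rw [mul_assoc, ← Real.exp_add, ← div_le_iff₀' hZ]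
    linarith [Real.add_one_le_exp (-1 + t / Z)]
  calc t ^ p ≤ (Z * Real.exp (-1) * Real.exp (t / Z)) ^ p := pow_le_pow_left₀ ht h p
    _ = _ := by rw [mul_pow, ← Real.exp_nat_mul]; ring_nf

lemma lintegral_sum_pow_pi_le (μ : Measure X) [IsProbabilityMeasure μ] {f : X → ℝ}
    (hf : Measurable f) (hf0 : 0 ≤ f) {Z : ℝ} (hZ : 0 < Z) (p : ℕ) :
    ∫⁻ w, .ofReal ((∑ k, f (w k)) ^ p) ∂(Measure.pi fun _ : ι => μ) ≤
      .ofReal ((Z * Real.exp (-1)) ^ p) *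
        (∫⁻ x, .ofReal (Real.exp (p / Z * f x)) ∂μ) ^ Fintype.card ι := by
  rw [← lintegral_exp_sum_pi μ (by fun_prop), ← lintegral_const_mul' _ _ ENNReal.ofReal_ne_top]
  refine lintegral_mono fun w => ?_
  rw [← ENNReal.ofReal_mul (by positivity), ← Finset.mul_sum]
  exact ENNReal.ofReal_le_ofReal
    (pow_le_mul_exp (Finset.sum_nonneg fun k _ => hf0 (w k)) hZ p)

lemma measure_prod_le_of_section {Y : Type*} [MeasurableSpace Y] (μ : Measure X)
    [IsProbabilityMeasure μ] (ν : Measure Y) [SFinite ν] {S : Set (X × Y)} (hS : MeasurableSet S)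
    {c : ℝ≥0∞} (hc : ∀ x, ν (Prod.mk x ⁻¹' S) ≤ c) : μ.prod ν S ≤ c := by
  rw [Measure.prod_apply hS]
  exact (lintegral_mono hc).trans_eq (by rw [lintegral_const, measure_univ, mul_one])

end ProductMeasure

lemma lintegral_pi_le_of_update {ι : Type*} [Fintype ι] [DecidableEq ι] {X : ι → Type*}
    [∀ i, MeasurableSpace (X i)] (μ : ∀ i, Measure (X i)) [∀ i, IsProbabilityMeasure (μ i)]
    {f g : (∀ i, X i) → ℝ≥0∞} (hf : Measurable f) (hg : Measurable g) (j : ι)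
    (hgj : ∀ w t, g (Function.update w j t) = g w)
    (hfg : ∀ w, ∫⁻ t, f (Function.update w j t) ∂μ j ≤ g w) :
    ∫⁻ w, f w ∂Measure.pi μ ≤ ∫⁻ w, g w ∂Measure.pi μ := by
  refine lintegral_le_of_lmarginal_le {j} hf hg fun w => ?_
  rw [lmarginal_singleton, lmarginal_singleton]
  simpa only [hgj, lintegral_const, measure_univ, mul_one] using hfg w

lemma measure_pi_le_of_update {ι : Type*} [Fintype ι] [DecidableEq ι] {X : ι → Type*}
    [∀ i, MeasurableSpace (X i)] (μ : ∀ i, Measure (X i)) [∀ i, IsProbabilityMeasure (μ i)]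
    {S : Set (∀ i, X i)} (hS : MeasurableSet S) (j : ι) {c : ℝ≥0∞}
    (hc : ∀ w, μ j (Function.update w j ⁻¹' S) ≤ c) : Measure.pi μ S ≤ c := by
  rw [← lintegral_indicator_one hS]
  refine (lintegral_pi_le_of_update μ (measurable_one.indicator hS) measurable_const j
    (fun _ _ => rfl) fun w => ?_).trans_eq (by rw [lintegral_const, measure_univ, mul_one])
  exact (lintegral_indicator_one (measurable_update w hS)).trans_le (hc w)

lemma lintegral_ite_nonneg_of_odd {E : Type*} [MeasurableSpace E] [Neg E] [MeasurableNeg E]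
    {μ : Measure E} [μ.IsNegInvariant] {f : E → ℝ} (hf : Measurable f)
    (hodd : f.Odd) (hne : ∀ᵐ x ∂μ, f x ≠ 0) {φ ψ : E → ℝ≥0∞} (hφ : Measurable φ)
    (hψ : Measurable ψ) (hφe : φ.Even) (hψe : ψ.Even) :
    ∫⁻ x, (if 0 ≤ f x then φ x else ψ x) ∂μ = (∫⁻ x, φ x ∂μ + ∫⁻ x, ψ x ∂μ) / 2 := by
  have hF : Measurable fun x => if 0 ≤ f x then φ x else ψ x :=
    Measurable.ite (measurableSet_le measurable_const hf) hφ hψ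
  rw [ENNReal.eq_div_iff two_ne_zero ENNReal.ofNat_ne_top, two_mul]
  nth_rewrite 2 [← (Measure.measurePreserving_neg μ).lintegral_comp hF]
  rw [← lintegral_add_left hF, ← lintegral_add_left hφ]
  refine lintegral_congr_ae ?_
  filter_upwards [hne] with x hx
  rw [hodd x, hφe x, hψe x]
  rcases hx.lt_or_gt with hneg | hpos
  · rw [if_neg (not_le.mpr hneg), if_pos (by linarith), add_comm]
  · rw [if_pos hpos.le, if_neg (by linarith)]

/-! ### Gaussian matrices -/

lemma l2_nonneg {p : ℕ} (v : Fin p → ℝ) : 0 ≤ l2 v := Real.sqrt_nonneg _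

lemma l2_sq {p : ℕ} (v : Fin p → ℝ) : l2 v ^ 2 = v ⬝ᵥ v := by
  rw [l2, Real.sq_sqrt (by positivity)]
  simp only [dotProduct, sq]

lemma l2_sq_mulVec {p q : ℕ} (M : Fin p → Fin q → ℝ) (v : Fin q → ℝ) :
    l2 (mulVec M v) ^ 2 = ∑ k, (M k ⬝ᵥ v) ^ 2 :=
  Real.sq_sqrt (by positivity)

lemma mulVec_mmul {p q r : ℕ} (M : Fin p → Fin q → ℝ) (N : Fin q → Fin r → ℝ) (v : Fin r → ℝ) :
    mulVec (mmul M N) v = mulVec M (mulVec N v) :=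
  (Matrix.mulVec_mulVec v (Matrix.of M) (Matrix.of N)).symm

lemma mulVec_idMat {p : ℕ} (v : Fin p → ℝ) : mulVec (idMat p) v = v := by
  ext i
  simp [mulVec, idMat]

lemma mulVec_zero {p q : ℕ} (M : Fin p → Fin q → ℝ) : mulVec M 0 = 0 := by
  ext i
  simp [mulVec]

lemma mulVec_diagMat {p : ℕ} (D v : Fin p → ℝ) : mulVec (diagMat D) v = D * v := by
  ext i
  simp [mulVec, diagMat]

lemma l2_sq_gated_mulVec {p q : ℕ} (w : Fin p → Fin q → ℝ) (h z : Fin q → ℝ) :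
    l2 (mulVec (diagMat (signOf (mulVec w h))) (mulVec w z)) ^ 2 =
      ∑ k, if 0 ≤ w k ⬝ᵥ h then (w k ⬝ᵥ z) ^ 2 else 0 := by
  rw [mulVec_diagMat, l2_sq]
  refine Finset.sum_congr rfl fun k _ => ?_
  change (if 0 ≤ w k ⬝ᵥ h then 1 else 0) * w k ⬝ᵥ z * ((if 0 ≤ w k ⬝ᵥ h then 1 else 0) * w k ⬝ᵥ z) =
    _
  split_ifs <;> ring

instance (p q : ℕ) (v : ℝ≥0) : IsProbabilityMeasure (gaussMat p q v) :=
  inferInstanceAs (IsProbabilityMeasure (Measure.pi fun _ : Fin p => gaussVec (Fin q) v))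

section Layer

variable {ι : Type*} [Fintype ι] {v : ℝ≥0} {h z : ι → ℝ}

lemma measurable_gated_sq : Measurable fun w => if 0 ≤ w ⬝ᵥ h then (w ⬝ᵥ z) ^ 2 else 0 :=
  Measurable.ite (measurableSet_le measurable_const (by fun_prop)) (by fun_prop) measurable_const

lemma lintegral_exp_gated_sq_gaussVec (hv : v ≠ 0) (hh : h ≠ 0) {s : ℝ}
    (hs : 2 * (s * (v * (z ⬝ᵥ z))) < 1) :
    ∫⁻ w, .ofReal (Real.exp (s * if 0 ≤ w ⬝ᵥ h then (w ⬝ᵥ z) ^ 2 else 0)) ∂gaussVec ι v =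
      .ofReal ((1 / √(1 - 2 * (s * (v * (z ⬝ᵥ z)))) + 1) / 2) := by
  have hsymm := lintegral_ite_nonneg_of_odd (f := (· ⬝ᵥ h)) (by fun_prop)
    (fun w => neg_dotProduct w h) (ae_dotProduct_ne_zero hv hh)
    (φ := fun w => .ofReal (Real.exp (s * (w ⬝ᵥ z) ^ 2))) (ψ := fun _ => 1)
    (by fun_prop) measurable_const (fun w => by simp only [neg_dotProduct, neg_sq]) fun _ => rfl
  rw [lintegral_exp_mul_dotProduct_sq_gaussVec hs, lintegral_const, measure_univ, mul_one] at hsymm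
  rw [ENNReal.ofReal_div_of_pos two_pos, ENNReal.ofReal_add (by positivity) zero_le_one,
    ENNReal.ofReal_one, ENNReal.ofReal_ofNat, ← hsymm]
  refine lintegral_congr fun w => ?_
  split_ifs <;> simp

lemma gaussVec_dotProduct_nonpos (hv : v ≠ 0) (hh : h ≠ 0) :
    gaussVec ι v {w | w ⬝ᵥ h ≤ 0} = 1 / 2 := by
  have hsymm := lintegral_ite_nonneg_of_odd (f := (· ⬝ᵥ -h)) (by fun_prop)
    (fun w => neg_dotProduct w (-h)) (ae_dotProduct_ne_zero hv (neg_ne_zero.mpr hh))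
    (φ := 1) (ψ := 0) measurable_one measurable_zero (fun _ => rfl) fun _ => rfl
  simp only [Pi.one_apply, Pi.zero_apply, lintegral_one, measure_univ, lintegral_zero, add_zero]
    at hsymm
  rw [← hsymm, ← lintegral_indicator_one (measurableSet_le (by fun_prop) measurable_const)]
  refine lintegral_congr fun w => ?_
  simp [Set.indicator]

end Layer

lemma gaussMat_relu_mulVec_eq_zero {p q : ℕ} {v : ℝ≥0} (hv : v ≠ 0) {h : Fin q → ℝ} (hh : h ≠ 0) :
    gaussMat p q v {w | relu (mulVec w h) = 0} = (1 / 2) ^ p := by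
  have hset : {w : Fin p → Fin q → ℝ | relu (mulVec w h) = 0} =
      Set.univ.pi fun _ => {w | w ⬝ᵥ h ≤ 0} := by
    ext w
    simp [funext_iff, relu, mulVec, dotProduct]
  change (Measure.pi fun _ : Fin p => gaussVec (Fin q) v) _ = _
  rw [hset, Measure.pi_pi]
  simp only [gaussVec_dotProduct_nonpos hv hh, Finset.prod_const, Finset.card_univ,
    Fintype.card_fin]

lemma one_div_sqrt_one_sub_le {x : ℝ} (hx0 : 0 ≤ x) (hx : x ≤ 1 / 2) :
    1 / √(1 - x) ≤ 1 + x / 2 + x ^ 2 := by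
  rw [div_le_iff₀ (Real.sqrt_pos.mpr (by linarith)), ← Real.sqrt_sq (by positivity :
    0 ≤ 1 + x / 2 + x ^ 2), ← Real.sqrt_mul (sq_nonneg _)]
  refine Real.le_sqrt_of_sq_le ?_
  have hcube : x ^ 3 ≤ (1 / 2) ^ 3 := pow_le_pow_left₀ hx0 hx 3
  have hdiff : (1 + x / 2 + x ^ 2) ^ 2 * (1 - x) = 1 + x ^ 2 * (5 / 4 - 5 / 4 * x - x ^ 3) := by
    ring
  have hfactor : 0 ≤ x ^ 2 * (5 / 4 - 5 / 4 * x - x ^ 3) :=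
    mul_nonneg (sq_nonneg x) (by linarith)
  rw [hdiff]
  linarith

lemma natCast_div_le_one_div_eight {p m : ℕ} (hp : 8 * p ≤ m) : (p / m : ℝ) ≤ 1 / 8 := by
  rcases m.eq_zero_or_pos with rfl | hm
  · simp
  · rw [div_le_iff₀ (by exact_mod_cast hm)]
    have : (8 * p : ℝ) ≤ m := by exact_mod_cast hp
    linarith

lemma lintegral_l2_gated_mulVec_pow_le {m q p : ℕ} (hm : 0 < m) (hp : 8 * p ≤ m)
    {h : Fin q → ℝ} (hh : h ≠ 0) (z : Fin q → ℝ) :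
    ∫⁻ w, .ofReal ((l2 (mulVec (diagMat (signOf (mulVec w h))) (mulVec w z)) ^ 2) ^ p)
        ∂gaussMat m q (2 / m) ≤
      .ofReal (Real.exp (8 * p ^ 2 / m)) * .ofReal ((l2 z ^ 2) ^ p) := by
  simp only [l2_sq_gated_mulVec, l2_sq z]
  rcases eq_or_ne z 0 with rfl | hz
  · simp only [dotProduct_zero, ne_eq, OfNat.ofNat_ne_zero, not_false_eq_true, zero_pow, ite_self,
      Finset.sum_const_zero, lintegral_const, measure_univ, mul_one]
    exact le_mul_of_one_le_left zero_le
      (ENNReal.one_le_ofReal.mpr (Real.one_le_exp (by positivity)))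
  have hZ := dotProduct_self_pos hz
  set r : ℝ := p / m with hr
  have hr8 : r ≤ 1 / 8 := natCast_div_le_one_div_eight hp
  have hvar : 2 * (p / (z ⬝ᵥ z) * ((2 / m : ℝ≥0) * (z ⬝ᵥ z))) = 4 * r := by
    push_cast
    rw [hr]
    field_simp
    ring
  have hrow : ∫⁻ w, .ofReal (Real.exp (p / (z ⬝ᵥ z) * if 0 ≤ w ⬝ᵥ h then (w ⬝ᵥ z) ^ 2 else 0))
      ∂gaussVec (Fin q) (2 / m) ≤ .ofReal (Real.exp (r + 8 * r ^ 2)) := by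
    rw [lintegral_exp_gated_sq_gaussVec (by positivity) hh (by linarith), hvar]
    refine ENNReal.ofReal_le_ofReal ?_
    linarith [one_div_sqrt_one_sub_le (x := 4 * r) (by positivity) (by linarith),
      Real.add_one_le_exp (r + 8 * r ^ 2)]
  refine (lintegral_sum_pow_pi_le (gaussVec (Fin q) (2 / m)) measurable_gated_sq
    (fun w => by positivity) hZ p).trans ?_
  grw [hrow]
  rw [Fintype.card_fin, ← ENNReal.ofReal_pow (Real.exp_pos _).le,
    ← ENNReal.ofReal_mul (by positivity), ← ENNReal.ofReal_mul (Real.exp_pos _).le, mul_pow,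
    ← Real.exp_nat_mul, ← Real.exp_nat_mul, mul_assoc, ← Real.exp_add, mul_comm]
  refine le_of_eq ?_
  congr 3
  rw [hr]
  field_simp
  ring

lemma lintegral_l2_mulVec_pow_le {d m p : ℕ} (hd : 0 < d) (hp : 0 < p) (y : Fin m → ℝ) :
    ∫⁻ B, .ofReal ((l2 (mulVec B y) ^ 2) ^ p) ∂gaussMat d m (1 / d) ≤
      .ofReal ((4 * p * Real.exp (-1) / d) ^ p * √2 ^ d) * .ofReal ((l2 y ^ 2) ^ p) := by
  simp only [l2_sq_mulVec, l2_sq y]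
  rcases eq_or_ne y 0 with rfl | hy
  · simp [hp.ne']
  have hY := dotProduct_self_pos hy
  have hvar : 2 * (p / (4 * p * (y ⬝ᵥ y) / d) * ((1 / d : ℝ≥0) * (y ⬝ᵥ y))) = 1 / 2 := by
    push_cast
    field_simp
    norm_num
  refine (lintegral_sum_pow_pi_le (gaussVec (Fin m) (1 / d)) (f := fun w => (w ⬝ᵥ y) ^ 2)
    (by fun_prop) (fun w => sq_nonneg _) (Z := 4 * p * (y ⬝ᵥ y) / d) (by positivity) p).trans ?_
  rw [lintegral_exp_mul_dotProduct_sq_gaussVec (by linarith), hvar, Fintype.card_fin,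
    ← ENNReal.ofReal_pow (by positivity), ← ENNReal.ofReal_mul (by positivity),
    ← ENNReal.ofReal_mul (by positivity), mul_right_comm _ _ ((y ⬝ᵥ y) ^ p), ← mul_pow,
    show (1 : ℝ) - 1 / 2 = 2⁻¹ by norm_num, Real.sqrt_inv, one_div, inv_inv]
  refine ENNReal.ofReal_le_ofReal (le_of_eq ?_)
  congr 2
  ring

lemma lintegral_l2_pow_gaussVec_le {m p : ℕ} (hm : 0 < m) (hp : 8 * p ≤ m) :
    ∫⁻ u, .ofReal ((l2 u ^ 2) ^ p) ∂gaussVec (Fin m) 1 ≤ .ofReal ((m * Real.exp 1) ^ p) := by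
  have hm' : (0 : ℝ) < m := by exact_mod_cast hm
  have hr8 : (p / m : ℝ) ≤ 1 / 8 := natCast_div_le_one_div_eight hp
  have hr0 : 0 ≤ (p / m : ℝ) := by positivity
  have hcoord : ∫⁻ t, .ofReal (Real.exp (p / m * t ^ 2)) ∂gaussianReal 0 1 ≤
      .ofReal (Real.exp (2 * (p / m))) := by
    rw [lintegral_exp_mul_sq_gaussianReal (by linarith)]
    refine ENNReal.ofReal_le_ofReal ?_
    nlinarith [one_div_sqrt_one_sub_le (x := 2 * (p / m)) (by positivity) (by linarith),
      Real.add_one_le_exp (2 * (p / m : ℝ))]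
  simp only [l2_sq, dotProduct, ← sq]
  refine (lintegral_sum_pow_pi_le (gaussianReal 0 1) (f := fun t => t ^ 2) (by fun_prop)
    (fun t => sq_nonneg t) hm' p).trans ?_
  grw [hcoord]
  rw [Fintype.card_fin, ← ENNReal.ofReal_pow (Real.exp_pos _).le,
    ← ENNReal.ofReal_mul (by positivity), mul_pow, mul_pow, ← Real.exp_nat_mul,
    ← Real.exp_nat_mul, ← Real.exp_nat_mul, mul_assoc, ← Real.exp_add]
  refine le_of_eq ?_
  congr 3
  field_simp
  ring

/-- The `2p`-th moment of `‖N u‖` over a standard Gaussian vector `u`. -/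
def gaussMoment {d m : ℕ} (N : Fin d → Fin m → ℝ) (p : ℕ) : ℝ≥0∞ :=
  ∫⁻ u, .ofReal ((l2 (mulVec N u) ^ 2) ^ p) ∂gaussVec (Fin m) 1

lemma dotProduct_mulVec_transpose_sq_le {d m : ℕ} (N : Fin d → Fin m → ℝ) (u : Fin m → ℝ)
    (v : Fin d → ℝ) : (u ⬝ᵥ mulVec (transpose N) v) ^ 2 ≤ l2 (mulVec N u) ^ 2 * l2 v ^ 2 := by
  have hadj : u ⬝ᵥ mulVec (transpose N) v = mulVec N u ⬝ᵥ v :=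
    (Matrix.dotProduct_transpose_mulVec (Matrix.of N) u v).trans (dotProduct_comm _ _)
  rw [hadj, l2_sq, l2_sq]
  simp only [dotProduct, ← sq]
  exact Finset.sum_mul_sq_le_sq_mul_sq _ _ _

lemma l2_mulVec_transpose_pow_le_gaussMoment {d m : ℕ} (N : Fin d → Fin m → ℝ) (v : Fin d → ℝ)
    (p : ℕ) :
    .ofReal ((p * Real.exp (-1)) ^ p) * .ofReal ((l2 (mulVec (transpose N) v) ^ 2) ^ p) ≤
      gaussMoment N p * .ofReal ((l2 v ^ 2) ^ p) := by
  set y := mulVec (transpose N) v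
  calc .ofReal ((p * Real.exp (-1)) ^ p) * .ofReal ((l2 y ^ 2) ^ p)
      ≤ (∫⁻ t, .ofReal ((t ^ 2) ^ p) ∂gaussianReal 0 1) * .ofReal ((l2 y ^ 2) ^ p) := by
        gcongr
        exact mul_exp_neg_one_pow_le_lintegral_gaussianReal p
    _ = ∫⁻ u, .ofReal (((u ⬝ᵥ y) ^ 2) ^ p) ∂gaussVec (Fin m) 1 := by
        rw [lintegral_comp_dotProduct_gaussVec 1 y (φ := fun t => .ofReal ((t ^ 2) ^ p))
          (by fun_prop), ← lintegral_mul_const' _ _ ENNReal.ofReal_ne_top]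
        refine lintegral_congr fun t => ?_
        rw [← ENNReal.ofReal_mul (by positivity), mul_pow √_, NNReal.coe_one, one_mul,
          Real.sq_sqrt (dotProduct_self_nonneg y), l2_sq, mul_pow, mul_comm]
    _ ≤ ∫⁻ u, .ofReal ((l2 (mulVec N u) ^ 2) ^ p) * .ofReal ((l2 v ^ 2) ^ p)
          ∂gaussVec (Fin m) 1 := by
        refine lintegral_mono fun u => ?_
        rw [← ENNReal.ofReal_mul (by positivity), ← mul_pow]
        exact ENNReal.ofReal_le_ofReal
          (pow_le_pow_left₀ (sq_nonneg _) (dotProduct_mulVec_transpose_sq_le N u v) p)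
    _ = gaussMoment N p * .ofReal ((l2 v ^ 2) ^ p) :=
        lintegral_mul_const' _ _ ENNReal.ofReal_ne_top

/-! ### The network as a function of its weights -/

section Measurability

variable {α : Type*} [MeasurableSpace α] {A : α → Fin m → Fin 𝔡 → ℝ}
  {W : α → Fin L → Fin m → Fin m → ℝ}

@[fun_prop]
lemma measurable_l2 {p : ℕ} {v : α → Fin p → ℝ} (hv : Measurable v) :
    Measurable fun t => l2 (v t) := by
  unfold l2; fun_prop

@[fun_prop]
lemma measurable_mulVec {p q : ℕ} {M : α → Fin p → Fin q → ℝ} {v : α → Fin q → ℝ}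
    (hM : Measurable M) (hv : Measurable v) : Measurable fun t => mulVec (M t) (v t) := by
  unfold mulVec; fun_prop

@[fun_prop]
lemma measurable_mmul {p q r : ℕ} {M : α → Fin p → Fin q → ℝ} {N : α → Fin q → Fin r → ℝ}
    (hM : Measurable M) (hN : Measurable N) : Measurable fun t => mmul (M t) (N t) := by
  unfold mmul; fun_prop

@[fun_prop]
lemma measurable_relu {p : ℕ} {v : α → Fin p → ℝ} (hv : Measurable v) :
    Measurable fun t => relu (v t) := by
  unfold relu; fun_prop

@[fun_prop]
lemma measurable_diagMat {p : ℕ} {v : α → Fin p → ℝ} (hv : Measurable v) :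
    Measurable fun t => diagMat (v t) := by
  refine measurable_pi_lambda _ fun i => measurable_pi_lambda _ fun j => ?_
  unfold diagMat
  split_ifs <;> fun_prop

@[fun_prop]
lemma measurable_signOf {p : ℕ} {v : α → Fin p → ℝ} (hv : Measurable v) :
    Measurable fun t => signOf (v t) :=
  measurable_pi_lambda _ fun _ => Measurable.ite
    (measurableSet_le measurable_const (by fun_prop)) measurable_const measurable_const

@[fun_prop]
lemma measurable_Wat (hW : Measurable W) (ℓ : ℕ) : Measurable fun t => Wat (W t) ℓ := by
  unfold Wat
  split_ifs <;> fun_prop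

@[fun_prop]
lemma measurable_hseq (hA : Measurable A) (hW : Measurable W) (x : Fin 𝔡 → ℝ) (ℓ : ℕ) :
    Measurable fun t => hseq (A t) (W t) x ℓ := by
  induction ℓ with
  | zero => simp only [hseq]; fun_prop
  | succ ℓ ih => simp only [hseq]; split_ifs <;> fun_prop

@[fun_prop]
lemma measurable_gseq (hA : Measurable A) (hW : Measurable W) (x : Fin 𝔡 → ℝ) (ℓ : ℕ) :
    Measurable fun t => gseq (A t) (W t) x ℓ := by
  cases ℓ <;> simp only [gseq] <;> fun_prop

@[fun_prop]
lemma measurable_prodDW (hA : Measurable A) (hW : Measurable W) (x : Fin 𝔡 → ℝ) (a b : ℕ) :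
    Measurable fun t => prodDW (A t) (W t) x a b := by
  unfold prodDW
  induction b with
  | zero => exact measurable_const
  | succ b ih => simp only [chainProd]; split_ifs <;> fun_prop

@[fun_prop]
lemma measurable_backMat {B : α → Fin d → Fin m → ℝ} (hB : Measurable B) (hA : Measurable A)
    (hW : Measurable W) (x : Fin 𝔡 → ℝ) (a : ℕ) :
    Measurable fun t => backMat (B t) (A t) (W t) x a := by
  unfold backMat; fun_prop

lemma measurableSet_hseq_eq_zero (hA : Measurable A) (hW : Measurable W) (x : Fin 𝔡 → ℝ) (ℓ : ℕ) :
    MeasurableSet {t | hseq (A t) (W t) x ℓ = 0} :=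
  measurable_hseq hA hW x ℓ (measurableSet_singleton 0)

@[fun_prop]
lemma measurable_gaussMoment {N : α → Fin d → Fin m → ℝ} (hN : Measurable N) (p : ℕ) :
    Measurable fun t => gaussMoment (N t) p :=
  Measurable.lintegral_prod_right'
    (f := fun y : α × (Fin m → ℝ) => .ofReal ((l2 (mulVec (N y.1) y.2) ^ 2) ^ p)) (by fun_prop)

end Measurability

section Update

variable (A : Fin m → Fin 𝔡 → ℝ) (W : Fin L → Fin m → Fin m → ℝ) (x : Fin 𝔡 → ℝ) (j : Fin L)
  (w : Fin m → Fin m → ℝ)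

lemma Wat_update_of_le {ℓ : ℕ} (h : ℓ ≤ j) : Wat (Function.update W j w) ℓ = Wat W ℓ := by
  unfold Wat
  split_ifs
  · rw [Function.update_of_ne fun hj => by have := congrArg Fin.val hj; grind]
  · rfl

lemma Wat_update_succ : Wat (Function.update W j w) (j + 1) = w := by
  rw [Wat, dif_pos ⟨by omega, j.2⟩]
  exact Function.update_self j w W

lemma hseq_update_of_le {ℓ : ℕ} (h : ℓ ≤ j) :
    hseq A (Function.update W j w) x ℓ = hseq A W x ℓ := by
  induction ℓ with
  | zero => rfl
  | succ ℓ ih => simp only [hseq, Wat_update_of_le W j w h, ih (by omega)]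

lemma hseq_update_succ :
    hseq A (Function.update W j w) x (j + 1) = relu (mulVec w (hseq A W x j)) := by
  rw [hseq, if_pos (by omega : (j : ℕ) + 1 ≤ L), Wat_update_succ,
    hseq_update_of_le A W x j w le_rfl]

lemma gseq_update_of_le {ℓ : ℕ} (h : ℓ ≤ j) :
    gseq A (Function.update W j w) x ℓ = gseq A W x ℓ := by
  cases ℓ with
  | zero => rfl
  | succ ℓ =>
    simp only [gseq, Wat_update_of_le W j w h, hseq_update_of_le A W x j w (by omega : ℓ ≤ j)]

lemma gseq_update_succ :
    gseq A (Function.update W j w) x (j + 1) = mulVec w (hseq A W x j) := by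
  rw [gseq, Wat_update_succ, hseq_update_of_le A W x j w le_rfl]

lemma prodDW_update_of_le (a : ℕ) {b : ℕ} (h : b ≤ j) :
    prodDW A (Function.update W j w) x a b = prodDW A W x a b := by
  unfold prodDW
  induction b with
  | zero => rfl
  | succ b ih =>
    simp only [chainProd, Wat_update_of_le W j w h, ih (by omega), gseq_update_of_le A W x j w h]

lemma mulVec_prodDW_update_succ {a : ℕ} (ha : a ≤ j + 1) (u : Fin m → ℝ) :
    mulVec (prodDW A (Function.update W j w) x a (j + 1)) u =
      mulVec (diagMat (signOf (mulVec w (hseq A W x j))))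
        (mulVec w (mulVec (prodDW A W x a j) u)) := by
  rw [prodDW, chainProd, if_pos ⟨ha, j.2⟩, mulVec_mmul, mulVec_mmul, gseq_update_succ,
    Wat_update_succ, ← prodDW, prodDW_update_of_le A W x j w a le_rfl]

lemma prodDW_succ_of_lt {a b : ℕ} (h : b + 1 < a) : prodDW A W x a (b + 1) = prodDW A W x a b := by
  rw [prodDW, chainProd, if_neg (by omega), prodDW]

lemma hseq_succ_eq_zero {ℓ : ℕ} (h : hseq A W x ℓ = 0) : hseq A W x (ℓ + 1) = 0 := by
  rw [hseq, h, mulVec_zero]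
  split_ifs
  · ext k
    simp [relu]
  · rfl

end Update

/-! ### Integrating one layer at a time -/

/-- Joint law of the hidden weights `W_1, …, W_L` at initialization. -/
abbrev hiddenLaw (m L : ℕ) : Measure (Fin L → Fin m → Fin m → ℝ) :=
  Measure.pi fun _ => gaussMat m m (2 / m)

/-- `‖D_b W_b ⋯ D_a W_a u‖^(2p)` where `h_b ≠ 0`, and `0` elsewhere. The truncation is needed since
a vanishing `h_{b-1}` turns `D_b` into the identity, which doubles the second moment. -/
def liveMoment (A : Fin m → Fin 𝔡 → ℝ) (W : Fin L → Fin m → Fin m → ℝ) (x : Fin 𝔡 → ℝ)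
    (a p b : ℕ) (u : Fin m → ℝ) : ℝ≥0∞ :=
  if hseq A W x b = 0 then 0 else .ofReal ((l2 (mulVec (prodDW A W x a b) u) ^ 2) ^ p)

@[fun_prop]
lemma measurable_liveMoment {α : Type*} [MeasurableSpace α] {A : α → Fin m → Fin 𝔡 → ℝ}
    {W : α → Fin L → Fin m → Fin m → ℝ} {u : α → Fin m → ℝ} (hA : Measurable A)
    (hW : Measurable W) (hu : Measurable u) (x : Fin 𝔡 → ℝ) (a p b : ℕ) :
    Measurable fun t => liveMoment (A t) (W t) x a p b (u t) :=
  Measurable.ite (measurableSet_hseq_eq_zero hA hW x b) measurable_const (by fun_prop)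

lemma liveMoment_le (A : Fin m → Fin 𝔡 → ℝ) (W : Fin L → Fin m → Fin m → ℝ) (x : Fin 𝔡 → ℝ)
    (a p b : ℕ) (u : Fin m → ℝ) :
    liveMoment A W x a p b u ≤ .ofReal ((l2 (mulVec (prodDW A W x a b) u) ^ 2) ^ p) := by
  unfold liveMoment
  split_ifs
  · exact zero_le
  · exact le_rfl

lemma lintegral_liveMoment_update_le {p : ℕ} (hm : 0 < m) (hp : 8 * p ≤ m)
    (A : Fin m → Fin 𝔡 → ℝ) (W : Fin L → Fin m → Fin m → ℝ) (x : Fin 𝔡 → ℝ) (a : ℕ)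
    (u : Fin m → ℝ) (j : Fin L) :
    ∫⁻ w, liveMoment A (Function.update W j w) x a p (j + 1) u ∂gaussMat m m (2 / m) ≤
      .ofReal (Real.exp (8 * p ^ 2 / m)) * liveMoment A W x a p j u := by
  by_cases hdead : hseq A W x j = 0
  · have hzero (w) : liveMoment A (Function.update W j w) x a p (j + 1) u = 0 := if_pos <|
      hseq_succ_eq_zero _ _ _ ((hseq_update_of_le A W x j w le_rfl).trans hdead)
    simp only [hzero, lintegral_zero, zero_le]
  have hlive : liveMoment A W x a p j u = .ofReal ((l2 (mulVec (prodDW A W x a j) u) ^ 2) ^ p) :=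
    if_neg hdead
  refine (lintegral_mono fun w => liveMoment_le _ _ _ _ _ _ _).trans ?_
  rw [hlive]
  rcases le_or_gt a (j + 1) with ha | ha
  · simp only [mulVec_prodDW_update_succ A W x j _ ha]
    exact lintegral_l2_gated_mulVec_pow_le hm hp hdead _
  · simp only [prodDW_succ_of_lt _ _ _ ha, prodDW_update_of_le A W x j _ a le_rfl,
      lintegral_const, measure_univ, mul_one]
    exact le_mul_of_one_le_left zero_le
      (ENNReal.one_le_ofReal.mpr (Real.one_le_exp (by positivity)))

lemma lintegral_liveMoment_le {p : ℕ} (hm : 0 < m) (hp : 8 * p ≤ m) (A : Fin m → Fin 𝔡 → ℝ)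
    (x : Fin 𝔡 → ℝ) (a : ℕ) (u : Fin m → ℝ) {b : ℕ} (hb : b ≤ L) :
    ∫⁻ W, liveMoment A W x a p b u ∂hiddenLaw m L ≤
      .ofReal (Real.exp (8 * p ^ 2 / m)) ^ b * .ofReal ((l2 u ^ 2) ^ p) := by
  induction b with
  | zero =>
    refine (lintegral_mono fun W => liveMoment_le _ _ _ _ _ _ _).trans ?_
    simp only [prodDW, chainProd, mulVec_idMat, lintegral_const, measure_univ, mul_one, pow_zero,
      one_mul, le_refl]
  | succ b ih =>
    calc ∫⁻ W, liveMoment A W x a p (b + 1) u ∂hiddenLaw m L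
        ≤ ∫⁻ W, .ofReal (Real.exp (8 * p ^ 2 / m)) * liveMoment A W x a p b u ∂hiddenLaw m L := by
          refine lintegral_pi_le_of_update _ (by fun_prop) (by fun_prop) ⟨b, hb⟩ (fun W w => ?_)
            fun W => lintegral_liveMoment_update_le hm hp A W x a u ⟨b, hb⟩
          rw [liveMoment, hseq_update_of_le A W x ⟨b, hb⟩ w le_rfl,
            prodDW_update_of_le A W x ⟨b, hb⟩ w a le_rfl, liveMoment]
      _ ≤ _ := by
          rw [lintegral_const_mul _ (by fun_prop), pow_succ' (ENNReal.ofReal _) b, mul_assoc]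
          gcongr
          exact ih (by omega)

lemma lintegral_lintegral_liveMoment_le {p : ℕ} (hm : 0 < m) (hp : 8 * p ≤ m)
    (A : Fin m → Fin 𝔡 → ℝ) (x : Fin 𝔡 → ℝ) (a : ℕ) :
    ∫⁻ W, ∫⁻ u, liveMoment A W x a p L u ∂gaussVec (Fin m) 1 ∂hiddenLaw m L ≤
      .ofReal (Real.exp (8 * p ^ 2 / m)) ^ L * .ofReal ((m * Real.exp 1) ^ p) := by
  rw [lintegral_lintegral_swap (by fun_prop)]
  refine (lintegral_mono fun u => lintegral_liveMoment_le hm hp A x a u le_rfl).trans ?_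
  rw [lintegral_const_mul' _ _ (by finiteness)]
  gcongr
  exact lintegral_l2_pow_gaussVec_le hm hp

lemma lintegral_gaussMoment_backMat_gaussMat_le {p : ℕ} (hd : 0 < d) (hp : 0 < p)
    (A : Fin m → Fin 𝔡 → ℝ) {W : Fin L → Fin m → Fin m → ℝ} {x : Fin 𝔡 → ℝ}
    (hx : hseq A W x L ≠ 0) (a : ℕ) :
    ∫⁻ B, gaussMoment (backMat B A W x a) p ∂gaussMat d m (1 / d) ≤
      .ofReal ((4 * p * Real.exp (-1) / d) ^ p * √2 ^ d) *
        ∫⁻ u, liveMoment A W x a p L u ∂gaussVec (Fin m) 1 := by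
  unfold gaussMoment
  rw [lintegral_lintegral_swap (by fun_prop), ← lintegral_const_mul' _ _ ENNReal.ofReal_ne_top]
  refine lintegral_mono fun u => ?_
  simp only [backMat, mulVec_mmul, liveMoment, if_neg hx]
  exact lintegral_l2_mulVec_pow_le hd hp _

/-! ### Failure probability for one input and one layer -/

/-- The space of weight triples `(A, W, B)` on which `initMeasure` lives. -/
abbrev Weights (𝔡 m d L : ℕ) : Type :=
  (Fin m → Fin 𝔡 → ℝ) × (Fin L → Fin m → Fin m → ℝ) × (Fin d → Fin m → ℝ)

instance : IsProbabilityMeasure (initMeasure 𝔡 m d L) := by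
  unfold initMeasure; infer_instance

lemma lintegral_initMeasure {F : Weights 𝔡 m d L → ℝ≥0∞} (hF : Measurable F) :
    ∫⁻ z, F z ∂initMeasure 𝔡 m d L =
      ∫⁻ A, ∫⁻ W, ∫⁻ B, F (A, W, B) ∂gaussMat d m (1 / d) ∂hiddenLaw m L
        ∂gaussMat m 𝔡 (2 / m) := by
  rw [initMeasure, lintegral_prod _ hF.aemeasurable]
  exact lintegral_congr fun A => lintegral_prod _ (hF.comp measurable_prodMk_left).aemeasurable

lemma hiddenLaw_hseq_succ_eq_zero_le (hm : 0 < m) (A : Fin m → Fin 𝔡 → ℝ) (x : Fin 𝔡 → ℝ)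
    (j : Fin L) :
    hiddenLaw m L ({W | hseq A W x j = 0}ᶜ ∩ {W | hseq A W x (j + 1) = 0}) ≤ (1 / 2) ^ m := by
  refine measure_pi_le_of_update _
    ((measurableSet_hseq_eq_zero measurable_const measurable_id x j).compl.inter
      (measurableSet_hseq_eq_zero measurable_const measurable_id x (j + 1))) j fun W => ?_
  by_cases hW : hseq A W x j = 0
  · simp [Set.preimage, hseq_update_of_le A W x j _ le_rfl, hW]
  · rw [← gaussMat_relu_mulVec_eq_zero (p := m) (v := 2 / m) (by positivity) hW]
    refine measure_mono fun w hw => ?_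
    rw [Set.mem_ofPred_eq, ← hseq_update_succ]
    exact hw.2

lemma hiddenLaw_hseq_eq_zero_le (hm : 0 < m) {A : Fin m → Fin 𝔡 → ℝ} {x : Fin 𝔡 → ℝ}
    (hA : relu (mulVec A x) ≠ 0) {b : ℕ} (hb : b ≤ L) :
    hiddenLaw m L {W | hseq A W x b = 0} ≤ b * (1 / 2) ^ m := by
  induction b with
  | zero => simp [hseq, hA]
  | succ b ih =>
    calc hiddenLaw m L {W | hseq A W x (b + 1) = 0}
        ≤ hiddenLaw m L ({W | hseq A W x b = 0} ∪
            ({W | hseq A W x b = 0}ᶜ ∩ {W | hseq A W x (b + 1) = 0})) :=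
          measure_mono fun W hW => or_iff_not_imp_left.mpr fun hb => ⟨hb, hW⟩
      _ ≤ b * (1 / 2) ^ m + (1 / 2) ^ m :=
          (measure_union_le _ _).trans (add_le_add (ih (by omega))
            (hiddenLaw_hseq_succ_eq_zero_le hm A x ⟨b, hb⟩))
      _ = (b + 1 : ℕ) * (1 / 2) ^ m := by push_cast; ring

lemma initMeasure_hseq_eq_zero_le (hm : 0 < m) {x : Fin 𝔡 → ℝ} (hx : x ≠ 0) :
    initMeasure 𝔡 m d L {z | hseq z.1 z.2.1 x L = 0} ≤ (L + 1) * (1 / 2) ^ m := by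
  set input : Set (Weights 𝔡 m d L) := {A | relu (mulVec A x) = 0} ×ˢ Set.univ
  set dead : Set (Weights 𝔡 m d L) := {z | hseq z.1 z.2.1 x L = 0}
  have hsplit : dead ⊆ input ∪ (inputᶜ ∩ dead) :=
    fun z hz => or_iff_not_imp_left.mpr fun hA => ⟨hA, hz⟩
  have hinput : initMeasure 𝔡 m d L input = (1 / 2) ^ m := by
    rw [initMeasure, Measure.prod_prod, measure_univ, mul_one,
      gaussMat_relu_mulVec_eq_zero (by positivity) hx]
  have hmeas : MeasurableSet (inputᶜ ∩ dead) :=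
    ((measurable_relu (measurable_mulVec measurable_id measurable_const)
      (measurableSet_singleton 0)).prod .univ).compl.inter
      (measurableSet_hseq_eq_zero (by fun_prop) (by fun_prop) x L)
  have hhidden : initMeasure 𝔡 m d L (inputᶜ ∩ dead) ≤ L * (1 / 2) ^ m := by
    refine measure_prod_le_of_section _ _ hmeas fun A => ?_
    by_cases hA : relu (mulVec A x) = 0
    · have hempty : Prod.mk A ⁻¹' (inputᶜ ∩ dead) = ∅ :=
        Set.eq_empty_of_forall_notMem fun y hy => hy.1 ⟨hA, trivial⟩
      rw [hempty, measure_empty]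
      exact zero_le
    grw [← hiddenLaw_hseq_eq_zero_le hm hA le_rfl]
    rw [← mul_one (hiddenLaw m L _), ← measure_univ (μ := gaussMat d m (1 / d)),
      ← Measure.prod_prod]
    exact measure_mono fun y hy => ⟨hy.2, trivial⟩
  refine (measure_mono hsplit).trans ((measure_union_le _ _).trans ?_)
  rw [hinput, add_mul, one_mul, add_comm]
  gcongr

lemma lintegral_gaussMoment_backMat_le {p : ℕ} (hm : 0 < m) (hd : 0 < d) (hp0 : 0 < p)
    (hp : 8 * p ≤ m) (x : Fin 𝔡 → ℝ) (a : ℕ) :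
    ∫⁻ z, (if hseq z.1 z.2.1 x L = 0 then 0 else gaussMoment (backMat z.2.2 z.1 z.2.1 x a) p)
        ∂initMeasure 𝔡 m d L ≤
      .ofReal ((4 * p * Real.exp (-1) / d) ^ p * √2 ^ d) *
        (.ofReal (Real.exp (8 * p ^ 2 / m)) ^ L * .ofReal ((m * Real.exp 1) ^ p)) := by
  set K : ℝ≥0∞ := .ofReal ((4 * p * Real.exp (-1) / d) ^ p * √2 ^ d)
  rw [lintegral_initMeasure (Measurable.ite
    (measurableSet_hseq_eq_zero (by fun_prop) (by fun_prop) x L) measurable_const (by fun_prop))]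
  have hfixed (A : Fin m → Fin 𝔡 → ℝ) :
      ∫⁻ W, ∫⁻ B, (if hseq A W x L = 0 then 0 else gaussMoment (backMat B A W x a) p)
          ∂gaussMat d m (1 / d) ∂hiddenLaw m L ≤
        K * (.ofReal (Real.exp (8 * p ^ 2 / m)) ^ L * .ofReal ((m * Real.exp 1) ^ p)) := by
    grw [← lintegral_lintegral_liveMoment_le hm hp A x a]
    rw [← lintegral_const_mul' _ _ ENNReal.ofReal_ne_top]
    refine lintegral_mono fun W => ?_
    by_cases hW : hseq A W x L = 0
    · simp only [if_pos hW, lintegral_zero, zero_le]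
    · simp only [if_neg hW]
      exact lintegral_gaussMoment_backMat_gaussMat_le hd hp0 A hW a
  exact (lintegral_mono hfixed).trans_eq (by rw [lintegral_const, measure_univ, mul_one])

lemma lintegral_gaussMoment_backMat_le_pow {p : ℕ} (hm : 0 < m) (hL : 0 < L) (hd : 0 < d)
    (hp : 8 * L * p ≤ m) (hdp : d ≤ p) (x : Fin 𝔡 → ℝ) (a : ℕ) :
    ∫⁻ z, (if hseq z.1 z.2.1 x L = 0 then 0 else gaussMoment (backMat z.2.2 z.1 z.2.1 x a) p)
        ∂initMeasure 𝔡 m d L ≤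
      .ofReal ((p * Real.exp (-1)) ^ p * (8 * Real.exp 2 * (m / d)) ^ p) := by
  refine (lintegral_gaussMoment_backMat_le hm hd (hd.trans_le hdp) (by nlinarith) x a).trans ?_
  have hsqrt : √2 ^ d ≤ (2 : ℝ) ^ p :=
    calc √2 ^ d ≤ 2 ^ d := by gcongr; exact (Real.sqrt_le_left two_pos.le).mpr (by norm_num)
      _ ≤ 2 ^ p := pow_le_pow_right₀ one_le_two hdp
  have hlayers : Real.exp (8 * p ^ 2 / m) ^ L ≤ Real.exp 1 ^ p := by
    rw [← Real.exp_nat_mul, ← Real.exp_nat_mul, Real.exp_le_exp, mul_one, ← mul_div_assoc,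
      div_le_iff₀ (by exact_mod_cast hm)]
    have : (8 * L * p : ℝ) ≤ m := by exact_mod_cast hp
    nlinarith [(Nat.cast_nonneg p : (0 : ℝ) ≤ p)]
  rw [← ENNReal.ofReal_pow (Real.exp_pos _).le, ← ENNReal.ofReal_mul (by positivity),
    ← ENNReal.ofReal_mul (by positivity)]
  refine ENNReal.ofReal_le_ofReal ?_
  grw [hsqrt, hlayers]
  refine le_of_eq ?_
  rw [show (2 : ℝ) = 1 + 1 by norm_num, Real.exp_add]
  simp only [← mul_pow]
  congr 1
  ring

lemma initMeasure_le_gaussMoment_backMat_le {p : ℕ} (hm : 0 < m) (hL : 0 < L) (hd : 0 < d)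
    (hp : 8 * L * p ≤ m) (hdp : d ≤ p) (x : Fin 𝔡 → ℝ) (a : ℕ) :
    initMeasure 𝔡 m d L {z | hseq z.1 z.2.1 x L ≠ 0 ∧
        .ofReal ((p * Real.exp (-1)) ^ p * (8 * Real.exp 3 * (m / d)) ^ p) ≤
          gaussMoment (backMat z.2.2 z.1 z.2.1 x a) p} ≤ .ofReal (Real.exp (-p)) := by
  set F : Weights 𝔡 m d L → ℝ≥0∞ := fun z =>
    if hseq z.1 z.2.1 x L = 0 then 0 else gaussMoment (backMat z.2.2 z.1 z.2.1 x a) p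
  set T : ℝ := (p * Real.exp (-1)) ^ p * (8 * Real.exp 3 * (m / d)) ^ p with hT
  have hTpos : 0 < T := by
    have : 0 < p := hd.trans_le hdp
    positivity
  have hF : Measurable F := Measurable.ite
    (measurableSet_hseq_eq_zero (by fun_prop) (by fun_prop) x L) measurable_const (by fun_prop)
  calc _ ≤ initMeasure 𝔡 m d L {z | .ofReal T ≤ F z} :=
        measure_mono fun z hz => hz.2.trans_eq (if_neg hz.1).symm
    _ ≤ (∫⁻ z, F z ∂initMeasure 𝔡 m d L) / .ofReal T :=
        meas_ge_le_lintegral_div hF.aemeasurable (ENNReal.ofReal_pos.mpr hTpos).ne'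
          ENNReal.ofReal_ne_top
    _ ≤ .ofReal (Real.exp (-p)) := by
        refine ENNReal.div_le_of_le_mul
          ((lintegral_gaussMoment_backMat_le_pow hm hL hd hp hdp x a).trans_eq ?_)
        rw [← ENNReal.ofReal_mul (Real.exp_pos _).le, hT, mul_left_comm, ← mul_neg_one (p : ℝ),
          Real.exp_nat_mul, ← mul_pow (Real.exp (-1)), show (2 : ℝ) = -1 + 3 by norm_num,
          Real.exp_add]
        ring_nf

lemma l2_mulVec_transpose_le_of_gaussMoment_le {N : Fin d → Fin m → ℝ} {p : ℕ} (hp : 0 < p)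
    {K : ℝ} (hK : 0 ≤ K)
    (hN : gaussMoment N p ≤ .ofReal ((p * Real.exp (-1)) ^ p * (K ^ 2) ^ p)) (v : Fin d → ℝ) :
    l2 (mulVec (transpose N) v) ≤ K * l2 v := by
  have hmoment := l2_mulVec_transpose_pow_le_gaussMoment N v p
  grw [hN] at hmoment
  rw [← ENNReal.ofReal_mul (by positivity), ← ENNReal.ofReal_mul (by positivity),
    ENNReal.ofReal_le_ofReal_iff (by positivity), mul_assoc,
    mul_le_mul_iff_right₀ (by positivity), ← mul_pow, ← mul_pow,
    pow_le_pow_iff_left₀ (by positivity) (by positivity) hp.ne',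
    pow_le_pow_iff_left₀ (l2_nonneg _) (mul_nonneg hK (l2_nonneg v)) two_ne_zero] at hmoment
  exact hmoment

lemma add_one_mul_two_inv_pow_le_exp (hL : 0 < L) (hm : 100 * L ≤ m) :
    (L + 1) * (1 / 2) ^ m ≤ Real.exp (-(m / (16 * L))) := by
  have hhalf : (1 / 2 : ℝ) ^ m ≤ Real.exp (-(m / 2)) := by
    calc (1 / 2 : ℝ) ^ m ≤ Real.exp (-(1 / 2)) ^ m := by
          gcongr
          linarith [Real.add_one_le_exp (-(1 / 2) : ℝ)]
      _ = Real.exp (-(m / 2)) := by rw [← Real.exp_nat_mul]; ring_nf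
  have hL1 : (1 : ℝ) ≤ L := by exact_mod_cast hL
  have hm' : (100 * L : ℝ) ≤ m := by exact_mod_cast hm
  have hdiv : (m / (16 * L) : ℝ) ≤ m / 16 := by gcongr; linarith
  calc ((L : ℝ) + 1) * (1 / 2) ^ m ≤ Real.exp L * Real.exp (-(m / 2)) := by
        gcongr
        exact Real.add_one_le_exp _
    _ ≤ Real.exp (-(m / (16 * L))) := by
        rw [← Real.exp_add, Real.exp_le_exp]
        linarith

lemma initMeasure_hseq_eq_zero_le_exp (hL : 0 < L) (hm : 100 * L ≤ m) {x : Fin 𝔡 → ℝ}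
    (hx : x ≠ 0) :
    initMeasure 𝔡 m d L {z | hseq z.1 z.2.1 x L = 0} ≤
      .ofReal (Real.exp (-(m / (16 * L)))) := by
  grw [initMeasure_hseq_eq_zero_le (by omega) hx, ← add_one_mul_two_inv_pow_le_exp hL hm]
  rw [ENNReal.ofReal_mul (by positivity), ENNReal.ofReal_pow (by norm_num),
    ENNReal.ofReal_add (by positivity) zero_le_one, ENNReal.ofReal_div_of_pos two_pos]
  simp only [ENNReal.ofReal_natCast, ENNReal.ofReal_one, ENNReal.ofReal_ofNat, le_refl]

lemma div_le_natCast_div (hL : 0 < L) (hm : 100 * L ≤ m) :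
    (m / (16 * L) : ℝ) ≤ (m / (8 * L) : ℕ) := by
  have hlt : m < 8 * L * (m / (8 * L) + 1) := Nat.lt_mul_div_succ m (by omega)
  rw [div_le_iff₀ (by positivity)]
  exact_mod_cast (by nlinarith : m ≤ m / (8 * L) * (16 * L))

lemma eight_mul_exp_three_mul_le {r : ℝ} (hr : 0 ≤ r) :
    8 * Real.exp 3 * r ≤ (100 * √r) ^ 2 := by
  have hexp : Real.exp 3 ≤ 3 ^ 3 :=
    calc Real.exp 3 = Real.exp 1 ^ 3 := by rw [← Real.exp_nat_mul]; norm_num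
      _ ≤ 3 ^ 3 := by gcongr; linarith [Real.exp_one_lt_d9]
  rw [mul_pow, Real.sq_sqrt hr]
  gcongr
  linarith

lemma initMeasure_lt_l2_mulVec_transpose_backMat_le (hL : 0 < L) (hd : 0 < d)
    (hm : 100 * L * d ≤ m) {x : Fin 𝔡 → ℝ} (hx : x ≠ 0) (a : ℕ) :
    initMeasure 𝔡 m d L {z | ∃ v : Fin d → ℝ, 100 * √(m / d) * l2 v <
        l2 (mulVec (transpose (backMat z.2.2 z.1 z.2.1 x a)) v)} ≤
      .ofReal (2 * Real.exp (-(m / (16 * L)))) := by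
  have hmL : 100 * L ≤ m := by nlinarith
  set p := m / (8 * L)
  have hp : 8 * L * p ≤ m := Nat.mul_div_le m (8 * L)
  have hdp : d ≤ p := (Nat.le_div_iff_mul_le (by omega)).mpr (by nlinarith)
  have hsub : {z : Weights 𝔡 m d L | ∃ v : Fin d → ℝ, 100 * √(m / d) * l2 v <
        l2 (mulVec (transpose (backMat z.2.2 z.1 z.2.1 x a)) v)} ⊆
      {z | hseq z.1 z.2.1 x L = 0} ∪ {z | hseq z.1 z.2.1 x L ≠ 0 ∧
        .ofReal ((p * Real.exp (-1)) ^ p * (8 * Real.exp 3 * (m / d)) ^ p) ≤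
          gaussMoment (backMat z.2.2 z.1 z.2.1 x a) p} := by
    rintro z ⟨v, hv⟩
    refine or_iff_not_imp_left.mpr fun hz => ⟨hz, le_of_not_ge fun hmoment => hv.not_ge ?_⟩
    refine l2_mulVec_transpose_le_of_gaussMoment_le (hd.trans_le hdp) (by positivity)
      (hmoment.trans ?_) v
    grw [eight_mul_exp_three_mul_le (by positivity)]
  have hmoment := initMeasure_le_gaussMoment_backMat_le (by omega) hL hd hp hdp x a
  grw [← div_le_natCast_div hL hmL] at hmoment
  rw [two_mul, ENNReal.ofReal_add (by positivity) (by positivity)]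
  exact (measure_mono hsub).trans ((measure_union_le _ _).trans
    (add_le_add (initMeasure_hseq_eq_zero_le_exp hL hmL hx) hmoment))

/-! ### Union bound -/

lemma ofReal_one_sub_le_measure_of_compl_le {Ω : Type*} [MeasurableSpace Ω] {μ : Measure Ω}
    [IsProbabilityMeasure μ] {S : Set Ω} {ε : ℝ} (hε : 0 ≤ ε) (hS : μ Sᶜ ≤ .ofReal ε) :
    .ofReal (1 - ε) ≤ μ S := by
  rw [ENNReal.ofReal_sub _ hε, ENNReal.ofReal_one, tsub_le_iff_right, ← measure_univ (μ := μ),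
    ← Set.union_compl_self S]
  exact (measure_union_le _ _).trans (by gcongr)

lemma mul_mul_two_mul_exp_le {n : ℕ} (hL : 0 < L) (hm : 100 * L ≤ m)
    (hlog : 100 * L * Real.log (n * L) ≤ m) :
    n * (L * (2 * Real.exp (-(m / (16 * L))))) ≤ Real.exp (-(1 / 25 * m / L)) := by
  have hL' : (0 : ℝ) < L := by exact_mod_cast hL
  set t : ℝ := m / L with ht
  have ht100 : 100 ≤ t := by
    rw [ht, le_div_iff₀ hL']
    exact_mod_cast hm
  have hnL : n * L ≤ Real.exp (t / 100) := by
    refine (Real.le_exp_log _).trans (Real.exp_le_exp.mpr ?_)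
    rw [ht, le_div_iff₀ (by norm_num), le_div_iff₀ hL']
    linarith
  have htwo : 2 ≤ Real.exp (t / 100) := by linarith [Real.add_one_le_exp (t / 100)]
  calc (n : ℝ) * (L * (2 * Real.exp (-(m / (16 * L)))))
      = n * L * 2 * Real.exp (-(t / 16)) := by
        rw [ht, div_div, mul_comm (L : ℝ) 16]
        ring
    _ ≤ Real.exp (t / 100) * Real.exp (t / 100) * Real.exp (-(t / 16)) := by gcongr
    _ ≤ Real.exp (-(1 / 25 * m / L)) := by
        rw [← Real.exp_add, ← Real.exp_add, Real.exp_le_exp, mul_div_assoc, ← ht]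
        linarith

theorem statement9_general {n : ℕ} (hL : 0 < L) (hd : 0 < d) {x : Fin n → Fin 𝔡 → ℝ}
    (hx : ∀ i, x i ≠ 0) (hlog : 100 * L * Real.log (n * L) ≤ m) (hm : 100 * L * d ≤ m) :
    ENNReal.ofReal (1 - Real.exp (-(1 / 25 * m / L))) ≤
      initMeasure 𝔡 m d L {z | ∀ i a, 1 ≤ a → a ≤ L → ∀ v,
        l2 (mulVec (transpose (backMat z.2.2 z.1 z.2.1 (x i) a)) v) ≤
          100 * √(m / d) * l2 v} := by
  refine ofReal_one_sub_le_measure_of_compl_le (Real.exp_pos _).le ?_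
  set bad : Fin n → Fin L → Set (Weights 𝔡 m d L) := fun i k =>
    {z | ∃ v : Fin d → ℝ, 100 * √(m / d) * l2 v <
      l2 (mulVec (transpose (backMat z.2.2 z.1 z.2.1 (x i) (k + 1))) v)}
  calc initMeasure 𝔡 m d L _ ≤ initMeasure 𝔡 m d L (⋃ i, ⋃ k, bad i k) := by
        refine measure_mono fun z hz => ?_
        simp only [Set.mem_compl_iff, Set.mem_ofPred_eq, not_forall, not_le] at hz
        obtain ⟨i, a, ha, haL, v, hv⟩ := hz
        refine Set.mem_iUnion₂.mpr ⟨i, ⟨a - 1, by omega⟩, v, ?_⟩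
        rwa [Nat.sub_add_cancel ha]
    _ ≤ ∑ i : Fin n, ∑ k : Fin L, initMeasure 𝔡 m d L (bad i k) :=
        (measure_iUnion_fintype_le _ _).trans
          (Finset.sum_le_sum fun i _ => measure_iUnion_fintype_le _ _)
    _ ≤ ∑ _i : Fin n, ∑ _k : Fin L, .ofReal (2 * Real.exp (-(m / (16 * L)))) := by
        gcongr with i _ k _
        exact initMeasure_lt_l2_mulVec_transpose_backMat_le hL hd hm (hx i) _
    _ = .ofReal (n * (L * (2 * Real.exp (-(m / (16 * L)))))) := by
        simp only [Finset.sum_const, Finset.card_univ, Fintype.card_fin, nsmul_eq_mul]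
        rw [ENNReal.ofReal_mul n.cast_nonneg, ENNReal.ofReal_mul L.cast_nonneg,
          ENNReal.ofReal_natCast, ENNReal.ofReal_natCast]
    _ ≤ .ofReal (Real.exp (-(1 / 25 * m / L))) :=
        ENNReal.ofReal_le_ofReal (mul_mul_two_mul_exp_le hL (by nlinarith) hlog)

lemma mul_log_le_of_mul_mul_log_le {n : ℕ} {K r : ℝ} (hn : 0 < n) (hK : 0 ≤ K)
    (h : K * n * L * Real.log (n * L) ≤ r) : K * L * Real.log (n * L) ≤ r := by
  have hlog : 0 ≤ Real.log (n * L) := by exact_mod_cast Real.log_natCast_nonneg (n * L)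
  have hn1 : (1 : ℝ) ≤ n := by exact_mod_cast hn
  calc K * L * Real.log (n * L) ≤ n * (K * L * Real.log (n * L)) :=
        le_mul_of_one_le_left (by positivity) hn1
    _ = K * n * L * Real.log (n * L) := by ring
    _ ≤ r := h

lemma mul_le_of_le_div_mul_log {K : ℝ} (hd : 0 < d) (hK : 4 ≤ K)
    (h : (d : ℝ) ≤ m / (K * Real.log m)) : K * d ≤ m := by
  have hd1 : (1 : ℝ) ≤ d := by exact_mod_cast hd
  have hlog_pos : 0 < Real.log m := by
    refine lt_of_not_ge fun hlog => ?_
    have : (m : ℝ) / (K * Real.log m) ≤ 0 := div_nonpos_of_nonneg_of_nonpos m.cast_nonneg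
      (mul_nonpos_of_nonneg_of_nonpos (by linarith) hlog)
    linarith
  rw [le_div_iff₀ (by positivity)] at h
  have hm : 3 ≤ m := by
    by_contra! hlt
    interval_cases m
    · simp at hlog_pos
    · simp at hlog_pos
    · push_cast at h
      nlinarith [Real.log_two_gt_d9, mul_le_mul hd1 hK (by norm_num) (by linarith)]
  have hlog : 1 ≤ Real.log m := by
    rw [Real.le_log_iff_exp_le (by positivity)]
    have : (3 : ℝ) ≤ m := by exact_mod_cast hm
    linarith [Real.exp_one_lt_d9]
  calc K * d ≤ d * (K * Real.log m) := by
        rw [mul_comm K, mul_le_mul_iff_right₀ (by positivity)]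
        exact le_mul_of_one_le_right (by linarith) hlog
    _ ≤ m := h

lemma ne_zero_of_l2_eq_one {v : Fin d → ℝ} (hv : l2 v = 1) : v ≠ 0 := by
  rintro rfl
  simp [l2] at hv

/-- Lemma 7.3 b, backward propagation bound, spectral version. -/
theorem statement9 :
    ∃ C c : ℝ, 0 < C ∧ 0 < c ∧
      ∀ (𝔡 m d L n : ℕ) (h𝔡 : 0 < 𝔡) (hL : 2 ≤ L) (hm : 0 < m) (hd : 0 < d) (hn : 0 < n)
        (x : Fin n → Fin 𝔡 → ℝ), (∀ i, l2 (x i) = 1) →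
        C * (n : ℝ) * (L : ℝ) * Real.log ((n : ℝ) * (L : ℝ)) ≤ (m : ℝ) →
        (d : ℝ) ≤ (m : ℝ) / (C * (L : ℝ) * Real.log m) →
        ENNReal.ofReal (1 - Real.exp (-(c * (m : ℝ) / (L : ℝ)))) ≤
          initMeasure 𝔡 m d L
            {z | ∀ (i : Fin n) (a : ℕ), 1 ≤ a → a ≤ L →
              ∀ v : Fin d → ℝ,
                l2 (mulVec (transpose (backMat z.2.2 z.1 z.2.1 (x i) a)) v) ≤
                  C * Real.sqrt ((m : ℝ) / (d : ℝ)) * l2 v} := by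
  refine ⟨100, 1 / 25, by norm_num, by norm_num, fun 𝔡 m d L n _ hL _ hd hn x hx hlog hdm => ?_⟩
  have hL1 : (1 : ℝ) ≤ L := by exact_mod_cast (by omega : 1 ≤ L)
  have hdL := mul_le_of_le_div_mul_log hd (by linarith) hdm
  exact statement9_general (by omega) hd (fun i => ne_zero_of_l2_eq_one (hx i))
    (mul_log_le_of_mul_mul_log_le hn (by norm_num) hlog) (by exact_mod_cast hdL)

end DNNPaper
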